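/- Let M be a Malcev algebra over F lying in the variety H, containing L = sl2(F), and such that mL ≠ 0 for every nonzero m ∈ M, with N_M = sl2(U) for the commutative associative algebra U ⊆ Γ(M) and J_M = V(1) ⊕ V(2). Let X = aH + bF + cE + x(1) + y(2) and Y = dH + eF + fE + z(1) + t(2), where a,b,c,d,e,f ∈ U and x,y,z,t ∈ V. Then XY = [X_L, Y_L] + (1/2)(⟨x,t⟩ + ⟨y,z⟩)H + ⟨x,z⟩F + ⟨y,t⟩E + (−az + bt + dx − ey)(1) + (−cz + at + fx − dy)(2), where X_L = aH + bF + cE, Y_L = dH + eF + fE, and [X_L, Y_L] denotes their product in N_M. -/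

import Mathlib

section
variable {K : Type*} [Field K] {M : Type*} [AddCommGroup M] [Module K M]

/-- the Jacobian `J(x,y,z) = (xy)z + (yz)x + (zx)y` -/
def mjac (μ : M →ₗ[K] M →ₗ[K] M) (x y z : M) : M :=
  μ (μ x y) z + μ (μ y z) x + μ (μ z x) y

/-- `{x,y,z} = (xy)z − (xz)y + 2·x(yz)` -/
def mbr (μ : M →ₗ[K] M →ₗ[K] M) (x y z : M) : M :=
  μ (μ x y) z - μ (μ x z) y + (2 : K) • μ x (μ y z)

/-- `h(y,z,t,x,u) = {yz,t,u}x + {yz,t,x}u + {yx,z,u}t + {yu,z,x}t` -/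
def mh (μ : M →ₗ[K] M →ₗ[K] M) (y z t x u : M) : M :=
  μ (mbr μ (μ y z) t u) x + μ (mbr μ (μ y z) t x) u +
    μ (mbr μ (μ y x) z u) t + μ (mbr μ (μ y u) z x) t

/-- A Malcev algebra structure: anticommutative (`x·x = 0`) together with the Malcev
identity `(xz)(yt) = ((xy)z)t + ((yz)t)x + ((zt)x)y + ((tx)y)z`. -/
def IsMalcev (μ : M →ₗ[K] M →ₗ[K] M) : Prop :=
  (∀ x, μ x x = 0) ∧
    ∀ x y z t, μ (μ x z) (μ y t) =
      μ (μ (μ x y) z) t + μ (μ (μ y z) t) x + μ (μ (μ z t) x) y + μ (μ (μ t x) y) z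

/-- the variety 𝓗 : `h(y,z,t,x,u) = 0` identically -/
def InVarietyH (μ : M →ₗ[K] M →ₗ[K] M) : Prop := ∀ y z t x u, mh μ y z t x u = 0

/-- `N_M = {m | J(m,a,b) = 0 ∀ a,b ∈ L}` -/
def NMset (μ : M →ₗ[K] M →ₗ[K] M) (L : Submodule K M) : Set M :=
  {m : M | ∀ a ∈ L, ∀ b ∈ L, mjac μ m a b = 0}

/-- `J_M = {m | {m,a,b} = 0 ∀ a,b ∈ L}` -/
def JMset (μ : M →ₗ[K] M →ₗ[K] M) (L : Submodule K M) : Set M :=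
  {m : M | ∀ a ∈ L, ∀ b ∈ L, mbr μ m a b = 0}

/-- the centroid Γ(M): linear operators commuting with all multiplications -/
def centroid (μ : M →ₗ[K] M →ₗ[K] M) : Set (Module.End K M) :=
  {α | ∀ x y : M, α (μ x y) = μ x (α y) ∧ α (μ x y) = μ (α x) y}

/-- `p(x,y,z,t) = −{zt,x,y} − {yt,z,x} + {xt,y,z}` -/
def pfun (μ : M →ₗ[K] M →ₗ[K] M) (x y z t : M) : M :=
  -(mbr μ (μ z t) x y) - mbr μ (μ y t) z x + mbr μ (μ x t) y z

/-- `U`: the span of the operators `α(y,a,b) : x ↦ p(x,y,a,b)` with `y ∈ M`, `a,b ∈ L` -/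
def Uspan (μ : M →ₗ[K] M →ₗ[K] M) (L : Submodule K M) : Submodule K (Module.End K M) :=
  Submodule.span K {φ : Module.End K M | ∃ y : M, ∃ a ∈ L, ∃ b ∈ L, ∀ x, φ x = pfun μ x y a b}

/-- `N_M = L·U`: the span of the elements `aα`, `a ∈ L`, `α ∈ U` -/
def NMspan (μ : M →ₗ[K] M →ₗ[K] M) (L : Submodule K M) : Submodule K M :=
  Submodule.span K {m : M | ∃ a ∈ L, ∃ φ ∈ Uspan μ L, m = φ a}

/-- the linear operator `m ↦ J(m,a,b)` -/
def jop (μ : M →ₗ[K] M →ₗ[K] M) (a b : M) : M →ₗ[K] M :=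
  μ.flip b ∘ₗ μ.flip a + μ (μ a b) + μ.flip a ∘ₗ μ b

/-- the linear operator `m ↦ {m,a,b}` -/
def bop (μ : M →ₗ[K] M →ₗ[K] M) (a b : M) : M →ₗ[K] M :=
  μ.flip b ∘ₗ μ.flip a - μ.flip a ∘ₗ μ.flip b + (2 : K) • μ.flip (μ a b)

/-- `N_M` as a submodule (intersection of the kernels of `m ↦ J(m,a,b)`, `a,b ∈ L`) -/
def NMker (μ : M →ₗ[K] M →ₗ[K] M) (L : Submodule K M) : Submodule K M :=
  ⨅ (a : M) (_ : a ∈ L) (b : M) (_ : b ∈ L), LinearMap.ker (jop μ a b)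

/-- `J_M` as a submodule (intersection of the kernels of `m ↦ {m,a,b}`, `a,b ∈ L`) -/
def JMker (μ : M →ₗ[K] M →ₗ[K] M) (L : Submodule K M) : Submodule K M :=
  ⨅ (a : M) (_ : a ∈ L) (b : M) (_ : b ∈ L), LinearMap.ker (bop μ a b)

/-- `Ann_M L` as a set -/
def AnnSet (μ : M →ₗ[K] M →ₗ[K] M) (L : Submodule K M) : Set M :=
  {m : M | ∀ a ∈ L, μ m a = 0}

/-- `Ann_M L` as a submodule -/
def Annker (μ : M →ₗ[K] M →ₗ[K] M) (L : Submodule K M) : Submodule K M :=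
  ⨅ (a : M) (_ : a ∈ L), LinearMap.ker (μ.flip a)

/-- `V = {w ∈ J_M : wH = w, wF = 0}` as a set -/
def Vset (μ : M →ₗ[K] M →ₗ[K] M) (L : Submodule K M) (Hm Fm : M) : Set M :=
  {w : M | w ∈ JMset μ L ∧ μ w Hm = w ∧ μ w Fm = 0}

/-- `V = {w ∈ J_M : wH = w, wF = 0}` as a submodule -/
def Vsub (μ : M →ₗ[K] M →ₗ[K] M) (L : Submodule K M) (Hm Fm : M) : Submodule K M :=
  JMker μ L ⊓ LinearMap.ker (μ.flip Hm - LinearMap.id) ⊓ LinearMap.ker (μ.flip Fm)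

theorem IsMalcev.skew {μ : M →ₗ[K] M →ₗ[K] M} (hMal : IsMalcev μ) (x y : M) :
    μ x y = -μ y x := by
  have h := hMal.1 (x + y)
  simp only [map_add, LinearMap.add_apply, hMal.1, zero_add, add_zero] at h
  exact eq_neg_of_add_eq_zero_right h

/-- In the variety `h = 0`, the operators `x ↦ p(x,y,z,t)` commute with right multiplications. -/
theorem pfun_mul {μ : M →ₗ[K] M →ₗ[K] M} (hMal : IsMalcev μ) (hVarH : InVarietyH μ)
    (x y z t u : M) : pfun μ (μ x u) y z t = μ (pfun μ x y z t) u := by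
  have h0 := hVarH t u y x z
  have h1 := hVarH x t z y u
  have h2 := hVarH y z u x t
  have h3 := hMal.2 (μ t u) y x z
  have h4 := hMal.2 (μ t u) y z x
  have h5 := hMal.2 (μ x u) t z y
  have h6 := hMal.2 (μ x u) y t z
  have h7 := hMal.2 (μ x u) z y t
  have h8 := hMal.2 (μ x y) t u z
  have h9 := hMal.2 (μ x y) t z u
  have h10 := hMal.2 (μ y z) u t x
  have h11 := hMal.2 (μ y z) u x t
  have h12 := hMal.2 (μ z t) x u y
  have h13 := hMal.2 (μ z t) x y u
  simp only [mh, pfun, mbr, map_add, map_sub, map_neg, map_smul, LinearMap.add_apply,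
    LinearMap.sub_apply, LinearMap.neg_apply, LinearMap.smul_apply]
    at h0 h1 h2 h3 h4 h5 h6 h7 h8 h9 h10 h11 h12 h13 ⊢
  simp only [hMal.skew y x, hMal.skew z x, hMal.skew t x, hMal.skew u x, hMal.skew z y,
    hMal.skew t y, hMal.skew u y, hMal.skew t z, hMal.skew u z, hMal.skew u t,
    fun b c => hMal.skew x (μ b c), fun b c => hMal.skew y (μ b c),
    fun b c => hMal.skew z (μ b c), fun b c => hMal.skew t (μ b c),
    fun b c => hMal.skew u (μ b c),
    hMal.skew (μ z t) (μ x y), hMal.skew (μ z u) (μ x y), hMal.skew (μ t u) (μ x y),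
    hMal.skew (μ y t) (μ x z), hMal.skew (μ y z) (μ x u), hMal.skew (μ y t) (μ x u),
    hMal.skew (μ z t) (μ x u), hMal.skew (μ t u) (μ y z),
    fun a b c d e => hMal.skew (μ a b) (μ (μ c d) e), map_neg, LinearMap.neg_apply]
    at h0 h1 h2 h3 h4 h5 h6 h7 h8 h9 h10 h11 h12 h13 ⊢
  linear_combination (norm := module) -h0 + h1 + h2 - h3 - h4 + (2 : K) • h5 + h6 + h7 + h8 + h9
    + h10 + h11 - h12 - h13

/-- In the variety `h = 0`, every operator in `U` lies in the centroid. -/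
theorem mem_centroid_of_mem_Uspan {μ : M →ₗ[K] M →ₗ[K] M} (hMal : IsMalcev μ)
    (hVarH : InVarietyH μ) (L : Submodule K M) {φ : Module.End K M} (hφ : φ ∈ Uspan μ L) : φ ∈ centroid μ := by
  have hmul : ∀ x u, φ (μ x u) = μ (φ x) u := by
    induction hφ using Submodule.span_induction with
    | mem φ h =>
      obtain ⟨y, a, -, b, -, hp⟩ := h
      exact fun x u => by rw [hp, hp, pfun_mul hMal hVarH]
    | zero => simp
    | add φ ψ _ _ hφ hψ => simp [hφ, hψ]
    | smul k φ _ hφ => simp [hφ]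
  exact fun x u => ⟨by rw [hMal.skew, map_neg, hmul, ← hMal.skew], hmul x u⟩

/-- The action of `aH + bF + cE` on `V(1) ⊕ V(2)`, for `a, b, c` in the centroid. -/
theorem mul_doublet (h2 : (2 : K) ≠ 0) (h3 : (3 : K) ≠ 0)
    {μ : M →ₗ[K] M →ₗ[K] M} (hMal : IsMalcev μ) {E H F : M}
    (hEH : μ E H = E) (hEF : μ E F = (2⁻¹ : K) • H)
    {L : Submodule K M} (hEL : E ∈ L) (hHL : H ∈ L) (hFL : F ∈ L)
    {w : M} (hw : w ∈ Vset μ L H F) {a b c : Module.End K M}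
    (ha : a ∈ centroid μ) (hb : b ∈ centroid μ) (hc : c ∈ centroid μ) :
    μ (a H + b F + c E) w = -a w - μ (c w) E ∧
      μ (a H + b F + c E) (μ w E) = μ (a w) E + b w := by
  obtain ⟨hJ, hwH, hwF⟩ := hw
  have hwEH : μ (μ w E) H = -μ w E := by
    have h := hJ E hEL H hHL
    rw [mbr, hwH, hEH] at h
    linear_combination (norm := module) h
  have hwEF : μ (μ w E) F = -w := by
    have h := hJ E hEL F hFL
    rw [mbr, hwF, hEF, map_smul, hwH, smul_smul, mul_inv_cancel₀ h2, map_zero,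
      LinearMap.zero_apply] at h
    linear_combination (norm := module) h
  have hwEE : μ (μ w E) E = 0 := by
    have h := hMal.2 w E E H
    have h' := hMal.2 w E H E
    simp only [hEH, hwEH, hwH, hMal.1, hMal.skew H w, hMal.skew H E, hMal.skew E w, map_neg,
      LinearMap.neg_apply, map_zero, LinearMap.zero_apply] at h h'
    have h0 : (3 : K) • μ (μ w E) E = 0 := by
      linear_combination (norm := module) h + h'
    exact (smul_eq_zero.mp h0).resolve_left h3
  simp only [map_add, LinearMap.add_apply, ← (ha _ _).2, ← (hb _ _).2, ← (hc _ _).2,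
    hMal.skew H, hMal.skew F, hMal.skew E, hwH, hwF, hwEH, hwEF, hwEE, map_neg, map_zero,
    neg_neg, neg_zero, add_zero, and_true]
  abel

/-- The explicit multiplication formula on
`M = sl₂(U) ⊕ V(1) ⊕ V(2)`: for `X = aH + bF + cE + x(1) + y(2)` and
`Y = dH + eF + fE + z(1) + t(2)`,
`XY = [X_L,Y_L] + ½(⟨x,t⟩+⟨y,z⟩)H + ⟨x,z⟩F + ⟨y,t⟩E + (−az+bt+dx−ey)(1) + (−cz+at+fx−dy)(2)`. -/
theorem stmt19
    (h2 : (2 : K) ≠ 0) (h3 : (3 : K) ≠ 0)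
    (μ : M →ₗ[K] M →ₗ[K] M) (hMal : IsMalcev μ) (hVarH : InVarietyH μ)
    (E H F : M) (hind : LinearIndependent K ![E, H, F])
    (hEH : μ E H = E) (hFH : μ F H = -F) (hEF : μ E F = (2⁻¹ : K) • H)
    (L : Submodule K M) (hL : L = Submodule.span K {E, H, F})
    (hfaith : ∀ m : M, m ≠ 0 → ∃ a ∈ L, μ m a ≠ 0)
    (bk : M → M → Module.End K M)
    (hbk : ∀ u ∈ Vset μ L H F, ∀ v ∈ Vset μ L H F,
      bk u v ∈ Uspan μ L ∧
      μ u v = bk u v F ∧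
      μ u (μ v E) = (2⁻¹ : K) • (bk u v H) ∧
      μ (μ u E) v = (2⁻¹ : K) • (bk u v H) ∧
      μ (μ u E) (μ v E) = bk u v E)
    (a b c d e f : Module.End K M)
    (ha : a ∈ Uspan μ L) (hb : b ∈ Uspan μ L) (hc : c ∈ Uspan μ L)
    (hd : d ∈ Uspan μ L) (he : e ∈ Uspan μ L) (hf : f ∈ Uspan μ L)
    (x y z t : M)
    (hx : x ∈ Vset μ L H F) (hy : y ∈ Vset μ L H F)
    (hz : z ∈ Vset μ L H F) (ht : t ∈ Vset μ L H F)
    (XL YL X Y : M)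
    (hXL : XL = a H + b F + c E) (hYL : YL = d H + e F + f E)
    (hX : X = XL + x + μ y E) (hY : Y = YL + z + μ t E) :
    μ X Y = μ XL YL
      + (2⁻¹ : K) • ((bk x t + bk y z) H)
      + bk x z F + bk y t E
      + (-(a z) + b t + d x - e y)
      + μ (-(c z) + a t + f x - d y) E := by
  have hEL : E ∈ L := hL ▸ Submodule.subset_span (by simp)
  have hHL : H ∈ L := hL ▸ Submodule.subset_span (by simp)
  have hFL : F ∈ L := hL ▸ Submodule.subset_span (by simp)
  have cen {φ : Module.End K M} (hφ : φ ∈ Uspan μ L) :=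
    mem_centroid_of_mem_Uspan hMal hVarH L hφ
  have actX {w : M} (hw : w ∈ Vset μ L H F) :=
    mul_doublet h2 h3 hMal hEH hEF hEL hHL hFL hw (cen ha) (cen hb) (cen hc)
  have actY {w : M} (hw : w ∈ Vset μ L H F) :=
    mul_doublet h2 h3 hMal hEH hEF hEL hHL hFL hw (cen hd) (cen he) (cen hf)
  rw [← hXL] at actX
  rw [← hYL] at actY
  obtain ⟨-, hxz, -, -, -⟩ := hbk x hx z hz
  obtain ⟨-, -, hxt, -, -⟩ := hbk x hx t ht
  obtain ⟨-, -, -, hyz, -⟩ := hbk y hy z hz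
  obtain ⟨-, -, -, -, hyt⟩ := hbk y hy t ht
  simp only [hX, hY, map_add, map_sub, map_neg, LinearMap.add_apply, LinearMap.sub_apply,
    LinearMap.neg_apply, hxz, hxt, hyz, hyt, (actX hz).1, (actX ht).2,
    hMal.skew x YL, hMal.skew (μ y E) YL, (actY hx).1, (actY hy).2]
  module

end
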